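/- Let λ* > 0 be a real and let k be a positive integer. Suppose (i) there exists a rooted tour cover (with any number of tours) whose maximum tour weight is at most λ*, and (ii) F is a forest in the complete graph G on V whose vertex set covers V, such that every edge of F has weight at most λ*, exactly n_LT trees of F have weight strictly less than λ*, every other tree of F has weight at least λ*, and the total weight of the trees of weight at least λ* is at most (k − n_LT)·λ*. Then there exists a rooted tour cover with at most k tours whose maximum tour weight is at most 5λ*. -/

import Mathlib

/-- The weight of a walk, given as the list of its vertices in order: the sum
of the weights of its consecutive pairs (with multiplicity). -/
def walkWeight {V : Type} (w : V → V → ℝ) (p : List V) : ℝ :=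
  ((p.zip p.tail).map fun q => w q.1 q.2).sum

/-- `p` is a closed walk (in the complete graph) starting and ending at `d`. -/
def IsClosedWalkAt {V : Type} (p : List V) (d : V) : Prop :=
  p ≠ [] ∧ p.head? = some d ∧ p.getLast? = some d ∧ p.Chain' (· ≠ ·)

/-- The total edge weight of a subgraph of the complete graph on `V`. -/
noncomputable def subWeight {V : Type} [Fintype V] (wE : Sym2 V → ℝ)
    (H : (⊤ : SimpleGraph V).Subgraph) : ℝ :=
  ∑ e ∈ H.edgeSet.toFinite.toFinset, wE e

inductive RTree (V : Type) where
  | leaf (v : V) : RTree V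
  | join (a b : RTree V) : RTree V

namespace RTree

def root {V : Type} : RTree V → V
  | leaf v => v
  | join a _ => a.root

def verts {V : Type} : RTree V → Set V
  | leaf v => {v}
  | join a b => a.verts ∪ b.verts

def weight {V : Type} (w : V → V → ℝ) : RTree V → ℝ
  | leaf _ => 0
  | join a b => a.weight w + b.weight w + w a.root b.root

def good {V : Type} (w : V → V → ℝ) (β : ℝ) : RTree V → Prop
  | leaf _ => True
  | join a b => a.good w β ∧ b.good w β ∧ w a.root b.root ≤ β

def tour {V : Type} : RTree V → List V
  | leaf v => [v]
  | join a b => a.root :: (b.tour ++ a.tour)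

theorem root_mem {V : Type} (t : RTree V) : t.root ∈ t.verts := by
  induction t with
  | leaf v => simp [root, verts]
  | join a b iha ihb => exact Or.inl iha

theorem split {V : Type} (w : V → V → ℝ) (β : ℝ) (hβ : 0 < β) (t : RTree V)
    (hg : t.good w β) (ht : β ≤ t.weight w) :
    ∃ p r : RTree V, p.weight w < 2 * β ∧ r.weight w ≤ t.weight w - β ∧ r.root = t.root ∧
      r.good w β ∧ t.verts ⊆ p.verts ∪ r.verts := by
  induction t with
  | leaf v => simp [weight] at ht; linarith
  | join a b iha ihb =>
    obtain ⟨ga, gb, ge⟩ := hg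
    simp only [weight] at ht
    by_cases hb : β ≤ b.weight w
    · obtain ⟨p, r, h1, h2, h3, h4, h5⟩ := ihb gb hb
      refine ⟨p, join a r, h1, ?_, rfl, ⟨ga, h4, by rw [h3]; exact ge⟩, ?_⟩
      · simp only [weight, h3]; linarith
      · intro x hx
        simp only [verts, Set.mem_union] at hx ⊢
        have := @h5 x
        simp only [Set.mem_union] at this
        tauto
    by_cases ha : β ≤ a.weight w
    · obtain ⟨p, r, h1, h2, h3, h4, h5⟩ := iha ga ha
      refine ⟨p, join r b, h1, ?_, h3, ⟨h4, gb, by rw [h3]; exact ge⟩, ?_⟩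
      · simp only [weight, h3]; linarith
      · intro x hx
        simp only [verts, Set.mem_union] at hx ⊢
        have := @h5 x
        simp only [Set.mem_union] at this
        tauto
    push Not at ha hb
    by_cases he : β ≤ b.weight w + w a.root b.root
    · refine ⟨join (leaf a.root) b, a, ?_, ?_, rfl, ga, ?_⟩
      · simp only [weight, root]; linarith
      · simp only [weight]; linarith
      · intro x hx
        simp only [verts, Set.mem_union] at hx ⊢
        tauto
    · refine ⟨join a b, leaf a.root, ?_, ?_, rfl, trivial, ?_⟩
      · simp only [weight]; linarith
      · simp only [weight]; linarith
      · exact Set.subset_union_left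

theorem splitAll {V : Type} (w : V → V → ℝ) (β : ℝ) (hβ : 0 < β) (n : ℕ) :
    ∀ t : RTree V, t.good w β → t.weight w < (n + 2) * β →
    ∃ L : List (RTree V), L.length ≤ n + 1 ∧ (∀ p ∈ L, p.weight w < 2 * β) ∧
      ∀ v ∈ t.verts, ∃ p ∈ L, v ∈ p.verts := by
  induction n with
  | zero =>
    intro t _ ht
    exact ⟨[t], by simp, by simpa using ht, by simp⟩
  | succ n ih =>
    intro t hg ht
    by_cases h : t.weight w < 2 * β
    · exact ⟨[t], by simp, by simpa using h, by simp⟩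
    push Not at h
    obtain ⟨p, r, h1, h2, -, h4, h5⟩ := split w β hβ t hg (by linarith)
    obtain ⟨L, l1, l2, l3⟩ := ih r h4 (by push_cast at ht; linarith)
    refine ⟨p :: L, by simpa using l1, ?_, ?_⟩
    · intro x hx
      rcases List.mem_cons.1 hx with rfl | hx
      · exact h1
      · exact l2 x hx
    · intro v hv
      rcases h5 hv with hv | hv
      · exact ⟨p, by simp, hv⟩
      · obtain ⟨x, hx, hx'⟩ := l3 v hv
        exact ⟨x, by simp [hx], hx'⟩

theorem attach {V : Type} (w : V → V → ℝ) (β : ℝ) (u v : V) (h : w u v ≤ β) (t : RTree V)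
    (hg : t.good w β) (hu : u ∈ t.verts) :
    ∃ t' : RTree V, t'.verts = insert v t.verts ∧ t'.weight w = t.weight w + w u v ∧
      t'.root = t.root ∧ t'.good w β := by
  induction t with
  | leaf x =>
    obtain rfl : u = x := hu
    refine ⟨join (leaf u) (leaf v), ?_, ?_, rfl, trivial, trivial, h⟩
    · simp only [verts]; ext; simp [or_comm]
    · simp [weight, root]
  | join a b iha ihb =>
    obtain ⟨ga, gb, ge⟩ := hg
    rcases hu with hu | hu
    · obtain ⟨t, h1, h2, h3, h4⟩ := iha ga hu
      refine ⟨join t b, ?_, ?_, h3, h4, gb, by rw [h3]; exact ge⟩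
      · simp only [verts, h1, Set.insert_union]
      · simp only [weight, h2, h3]; ring
    · obtain ⟨t, h1, h2, h3, h4⟩ := ihb gb hu
      refine ⟨join a t, ?_, ?_, rfl, ga, h4, by rw [h3]; exact ge⟩
      · simp only [verts, h1, Set.union_insert]
      · simp only [weight, h2, h3]; ring

end RTree

theorem walkWeight_cons_cons {V : Type} (w : V → V → ℝ) (x y : V) (l : List V) :
    walkWeight w (x :: y :: l) = w x y + walkWeight w (y :: l) := by
  simp [walkWeight]

theorem walkWeight_single {V : Type} (w : V → V → ℝ) (x : V) :
    walkWeight w [x] = 0 := by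
  simp [walkWeight]

theorem walkWeight_append {V : Type} (w : V → V → ℝ) (x y : V) (l m : List V)
    (hl : l.getLast? = some x) (hm : m.head? = some y) :
    walkWeight w (l ++ m) = walkWeight w l + w x y + walkWeight w m := by
  induction l with
  | nil => simp at hl
  | cons a l ih =>
    cases l with
    | nil =>
      cases m with
      | nil => simp at hm
      | cons b m =>
        simp at hl hm
        subst hl hm
        simp [walkWeight_cons_cons, walkWeight_single]
    | cons b l =>
      have := ih (by simpa using hl)
      simp only [List.cons_append, walkWeight_cons_cons] at this ⊢
      linarith

theorem RTree.tour_spec {V : Type} (w : V → V → ℝ) (hsymm : ∀ u v, w u v = w v u) (t : RTree V) :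
    t.tour.head? = some t.root ∧ t.tour.getLast? = some t.root ∧
    walkWeight w t.tour = 2 * t.weight w ∧ ∀ v ∈ t.verts, v ∈ t.tour := by
  induction t with
  | leaf v => simp [tour, root, weight, verts, walkWeight_single]
  | join a b iha ihb =>
    obtain ⟨a1, a2, a3, a4⟩ := iha
    obtain ⟨b1, b2, b3, b4⟩ := ihb
    refine ⟨rfl, ?_, ?_, ?_⟩
    · simp [tour, root, List.getLast?_cons, List.getLast?_append, a2]
    · have e : (join a b).tour = [a.root] ++ (b.tour ++ a.tour) := rfl
      rw [e, walkWeight_append w a.root b.root _ _ rfl (by simp [b1]),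
        walkWeight_append w b.root a.root _ _ b2 a1, walkWeight_single, a3, b3, hsymm b.root a.root]
      simp only [weight]; ring
    · intro v hv
      rcases hv with hv | hv
      · simp [tour, a4 v hv]
      · simp [tour, b4 v hv]

theorem dedupWalk {V : Type} (w : V → V → ℝ) (hzero : ∀ v, w v v = 0) (l : List V) :
    ∃ l' : List V, l'.head? = l.head? ∧ l'.getLast? = l.getLast? ∧ l'.IsChain (· ≠ ·) ∧
      (∀ v ∈ l, v ∈ l') ∧ walkWeight w l' = walkWeight w l := by
  induction l with
  | nil => exact ⟨[], by simp⟩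
  | cons x l ih =>
    cases l with
    | nil => exact ⟨[x], by simp⟩
    | cons y m =>
      obtain ⟨l', h1, h2, h3, h4, h5⟩ := ih
      by_cases hxy : x = y
      · subst hxy
        refine ⟨l', by simpa using h1, by simpa using h2, h3, ?_, ?_⟩
        · intro v hv
          apply h4; simpa using hv
        · rw [h5, walkWeight_cons_cons, hzero, zero_add]
      · cases l' with
        | nil => simp at h1
        | cons z l' =>
          obtain rfl : z = y := by simpa using h1
          refine ⟨x :: z :: l', rfl, ?_, ?_, ?_, ?_⟩
          · rw [List.getLast?_cons_cons, List.getLast?_cons_cons, h2]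
          · exact List.isChain_cons_cons.2 ⟨hxy, h3⟩
          · intro v hv
            rcases List.mem_cons.1 hv with rfl | hv
            · simp
            · exact List.mem_cons_of_mem _ (h4 v hv)
          · rw [walkWeight_cons_cons, walkWeight_cons_cons, h5]

theorem walkWeight_ends {V : Type} (w : V → V → ℝ) (hzero : ∀ v, w v v = 0)
    (htri : ∀ u v x, w u x ≤ w u v + w v x) (e : V) (l : List V) : ∀ d,
    l.head? = some d → l.getLast? = some e → w d e ≤ walkWeight w l := by
  induction l with
  | nil => simp
  | cons x l ih =>
    intro d hd he
    obtain rfl : x = d := by simpa using hd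
    cases l with
    | nil =>
      obtain rfl : x = e := by simpa using he
      simp [walkWeight_single, hzero]
    | cons y m =>
      have := ih y rfl (by simpa using he)
      rw [walkWeight_cons_cons]
      linarith [htri x y e]

theorem walkWeight_mem {V : Type} (w : V → V → ℝ) (hzero : ∀ v, w v v = 0)
    (htri : ∀ u v x, w u x ≤ w u v + w v x) (e v : V) (l : List V) : ∀ d,
    l.head? = some d → l.getLast? = some e → v ∈ l → w d v + w v e ≤ walkWeight w l := by
  induction l with
  | nil => simp
  | cons x l ih =>
    intro d hd he hv
    obtain rfl : x = d := by simpa using hd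
    rcases List.mem_cons.1 hv with rfl | hv
    · rw [hzero, zero_add]
      exact walkWeight_ends w hzero htri e _ _ rfl he
    cases l with
    | nil => simp at hv
    | cons y m =>
      have := ih y rfl (by simpa using he) hv
      rw [walkWeight_cons_cons]
      linarith [htri x y v]

theorem exists_rtree {V : Type} [Fintype V] [DecidableEq V] (w : V → V → ℝ)
    (hnonneg : ∀ u v, 0 ≤ w u v) (hsymm : ∀ u v, w u v = w v u) (β : ℝ)
    (H : (⊤ : SimpleGraph V).Subgraph) (hc : H.Connected)
    (hedge : ∀ e ∈ H.edgeSet, Sym2.lift ⟨w, hsymm⟩ e ≤ β) :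
    ∃ t : RTree V, t.good w β ∧ t.verts = H.verts ∧
      t.weight w ≤ subWeight (Sym2.lift ⟨w, hsymm⟩) H := by
  classical
  let P : Finset V → Prop := fun S => (S : Set V) ⊆ H.verts ∧ ∃ t : RTree V, t.good w β ∧
    t.verts = S ∧ ∃ E : Finset (Sym2 V), (E : Set (Sym2 V)) ⊆ H.edgeSet ∧
      (∀ e ∈ E, ∀ x ∈ e, x ∈ S) ∧ t.weight w = ∑ e ∈ E, Sym2.lift ⟨w, hsymm⟩ e
  obtain ⟨v0, hv0⟩ := hc.nonempty
  have hP0 : P {v0} := by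
    refine ⟨by simpa using hv0, RTree.leaf v0, trivial, by simp [RTree.verts], ∅, ?_⟩
    simp [RTree.weight]
  obtain ⟨S, hS, hmax⟩ := Finset.exists_max_image (Finset.univ.filter P) Finset.card
    ⟨{v0}, by simpa using hP0⟩
  simp only [Finset.mem_filter, Finset.mem_univ, true_and] at hS hmax
  obtain ⟨hSH, t, hg, htv, E, hE, hES, hw⟩ := hS
  have hSeq : (S : Set V) = H.verts := by
    refine hSH.antisymm ?_
    by_contra hne
    obtain ⟨b, hb, hbS⟩ := Set.not_subset.1 hne
    have ha : t.root ∈ (S : Set V) := htv ▸ t.root_mem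
    obtain ⟨p⟩ := hc.coe.preconnected ⟨t.root, hSH ha⟩ ⟨b, hb⟩
    obtain ⟨d, -, hd1, hd2⟩ := p.exists_boundary_dart {x | x.1 ∈ (S : Set V)} ha hbS
    have hadj : H.Adj d.fst.1 d.snd.1 := d.adj
    set u := d.fst.1
    set v := d.snd.1
    have hu : u ∈ S := hd1
    have hv : v ∉ S := hd2
    have huvE : s(u, v) ∈ H.edgeSet := hadj
    obtain ⟨t', h1, h2, h3, h4⟩ := RTree.attach w β u v (hedge _ huvE) t hg (by rw [htv]; exact hu)
    have hP : P (insert v S) := by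
      refine ⟨?_, t', h4, by rw [h1, htv]; simp, insert s(u, v) E, ?_, ?_, ?_⟩
      · rw [Finset.coe_insert]
        exact Set.insert_subset hadj.snd_mem hSH
      · rw [Finset.coe_insert]
        exact Set.insert_subset huvE hE
      · intro e he x hx
        rcases Finset.mem_insert.1 he with rfl | he
        · rcases Sym2.mem_iff.1 hx with rfl | rfl
          · exact Finset.mem_insert_of_mem hu
          · exact Finset.mem_insert_self _ _
        · exact Finset.mem_insert_of_mem (hES e he x hx)
      · rw [Finset.sum_insert, h2, hw]
        · simp [add_comm]
        · intro h
          exact hv (hES _ h v (by simp))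
    have := hmax _ hP
    rw [Finset.card_insert_of_notMem hv] at this
    omega
  refine ⟨t, hg, htv.trans hSeq, ?_⟩
  rw [hw]
  unfold subWeight
  apply Finset.sum_le_sum_of_subset_of_nonneg
  · intro e he
    simpa using hE he
  · intro e _ _
    induction e with
    | _ a b => exact hnonneg a b

/-- non-algorithmic core of the paper's Theorem 1, with
`λ = λ*`: let `λ* > 0` and `k ≥ 1`.  Suppose (i) there is a rooted tour cover
(with any number of tours) of maximum tour weight at most `λ*`, and (ii) `F`
is a forest (given by its pairwise vertex-disjoint trees) covering `V`, with
all edges of weight at most `λ*`, exactly `n_LT` trees of weight `< λ*`, all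
other trees of weight `≥ λ*`, and total weight of the trees of weight `≥ λ*`
at most `(k − n_LT) λ*`.  Then there is a rooted tour cover with at most `k`
tours of maximum tour weight at most `5λ*`. -/
theorem stmt14 {V : Type} [Fintype V] [DecidableEq V]
    (w : V → V → ℝ)
    (hzero : ∀ v, w v v = 0)
    (hnonneg : ∀ u v, 0 ≤ w u v)
    (hsymm : ∀ u v, w u v = w v u)
    (htri : ∀ u v x, w u x ≤ w u v + w v x)
    (D : Finset V) (hD : D.Nonempty)
    (lamstar : ℝ) (hpos : 0 < lamstar)
    (k : ℕ) (hk : 0 < k) (nLT : ℕ)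
    (ι : Type) (opt : ι → List V)
    (hoptclosed : ∀ i, ∃ d ∈ D, IsClosedWalkAt (opt i) d)
    (hoptcov : ∀ v : V, ∃ i, v ∈ opt i)
    (hoptwt : ∀ i, walkWeight w (opt i) ≤ lamstar)
    (q : ℕ) (T : Fin q → (⊤ : SimpleGraph V).Subgraph)
    (hconn : ∀ i, (T i).Connected)
    (hacyc : ∀ i, (T i).coe.IsAcyclic)
    (hdisj : ∀ i j, i ≠ j → Disjoint (T i).verts (T j).verts)
    (hcov : ∀ v : V, ∃ i, v ∈ (T i).verts)
    (hedge : ∀ i, ∀ e ∈ (T i).edgeSet, Sym2.lift ⟨w, hsymm⟩ e ≤ lamstar)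
    (hlight : (Finset.univ.filter
        (fun i => subWeight (Sym2.lift ⟨w, hsymm⟩) (T i) < lamstar)).card
      = nLT)
    (hheavy : ∑ i ∈ Finset.univ.filter
          (fun i => lamstar ≤ subWeight (Sym2.lift ⟨w, hsymm⟩) (T i)),
        subWeight (Sym2.lift ⟨w, hsymm⟩) (T i)
      ≤ ((k : ℝ) - (nLT : ℝ)) * lamstar) :
    ∃ (q' : ℕ) (_ : q' ≤ k) (tours : Fin q' → List V),
      (∀ i, ∃ d ∈ D, IsClosedWalkAt (tours i) d) ∧
      (∀ v : V, ∃ i, v ∈ tours i) ∧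
      (∀ i, walkWeight w (tours i) ≤ 5 * lamstar) := by
  classical
  have hdep : ∀ v, ∃ d ∈ D, w d v + w v d ≤ lamstar := by
    intro v
    obtain ⟨i, hi⟩ := hoptcov v
    obtain ⟨d, hd, h1, h2, h3, h4⟩ := hoptclosed i
    exact ⟨d, hd, (walkWeight_mem w hzero htri d v _ d h2 h3 hi).trans (hoptwt i)⟩
  have htour : ∀ t : RTree V, t.weight w < 2 * lamstar → ∃ l : List V,
      (∃ d ∈ D, IsClosedWalkAt l d) ∧ (∀ v ∈ t.verts, v ∈ l) ∧ walkWeight w l ≤ 5 * lamstar := by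
    intro t ht
    obtain ⟨d, hd, hdw⟩ := hdep t.root
    obtain ⟨t1, t2, t3, t4⟩ := t.tour_spec w hsymm
    obtain ⟨l, h1, h2, h3, h4, h5⟩ := dedupWalk w hzero ([d] ++ (t.tour ++ [d]))
    refine ⟨l, ⟨d, hd, ?_, ?_, ?_, h3⟩, ?_, ?_⟩
    · rintro rfl
      simp at h1
    · rw [h1]; rfl
    · rw [h2]; simp [List.getLast?_cons, List.getLast?_append]
    · intro v hv
      apply h4
      simp [t4 v hv]
    · rw [h5, walkWeight_append w d t.root _ _ rfl (by simp [t1]),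
        walkWeight_append w t.root d _ _ t2 rfl, walkWeight_single, t3]
      linarith
  set W : Fin q → ℝ := fun i => subWeight (Sym2.lift ⟨w, hsymm⟩) (T i) with hW
  have hW' : ∀ i, subWeight (Sym2.lift ⟨w, hsymm⟩) (T i) = W i := fun _ => rfl
  simp only [hW'] at hlight hheavy
  have hpieces : ∀ i, ∃ L : List (RTree V),
      (L.length : ℝ) ≤ (if W i < lamstar then 1 else 0) +
        (if lamstar ≤ W i then W i / lamstar else 0) ∧
      (∀ p ∈ L, p.weight w < 2 * lamstar) ∧ ∀ v ∈ (T i).verts, ∃ p ∈ L, v ∈ p.verts := by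
    intro i
    obtain ⟨t, hg, hv, ht⟩ := exists_rtree w hnonneg hsymm lamstar (T i) (hconn i) (hedge i)
    rw [hW'] at ht
    rw [← hv]
    by_cases h : W i < lamstar
    · obtain ⟨L, l1, l2⟩ := RTree.splitAll w lamstar hpos 0 t hg (by push_cast; linarith)
      refine ⟨L, ?_, l2⟩
      rw [if_pos h, if_neg (not_le.2 h)]
      have : (L.length : ℝ) ≤ (0 + 1 : ℕ) := by exact_mod_cast l1
      simpa using this
    · push Not at h
      have h1 : 1 ≤ W i / lamstar := (one_le_div hpos).2 h
      have hf : 1 ≤ ⌊W i / lamstar⌋₊ := Nat.one_le_floor_iff _ |>.2 h1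
      obtain ⟨n, hn⟩ := Nat.exists_eq_add_of_le' hf
      have hlt := Nat.lt_floor_add_one (W i / lamstar)
      have hle := Nat.floor_le (zero_le_one.trans h1)
      rw [hn] at hlt hle
      rw [div_lt_iff₀ hpos] at hlt
      push_cast at hlt hle
      obtain ⟨L, l1, l2⟩ := RTree.splitAll w lamstar hpos n t hg (by linarith)
      refine ⟨L, ?_, l2⟩
      rw [if_neg (not_lt.2 h), if_pos h]
      have : (L.length : ℝ) ≤ (n + 1 : ℕ) := by exact_mod_cast l1
      push_cast at this
      linarith
  choose L hL1 hL2 hL3 using hpieces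
  let M : List (RTree V) := (List.finRange q).flatMap L
  have hM : ∀ p, p ∈ M ↔ ∃ i, p ∈ L i := by intro p; simp [M]
  have hMlen : M.length = ∑ i, (L i).length := by
    simp [M, List.length_flatMap, Fin.sum_univ_def]
  have hMk : M.length ≤ k := by
    have h1 : (M.length : ℝ) ≤ ∑ i, ((if W i < lamstar then (1 : ℝ) else 0) +
        (if lamstar ≤ W i then W i / lamstar else 0)) := by
      rw [hMlen]; push_cast
      exact Finset.sum_le_sum fun i _ => hL1 i
    rw [Finset.sum_add_distrib, ← Finset.sum_filter, ← Finset.sum_filter, ← Finset.sum_div] at h1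
    have h2 := (div_le_iff₀ hpos).2 hheavy
    have h3 : (∑ i ∈ Finset.univ.filter (fun i => W i < lamstar), (1 : ℝ)) = nLT := by
      rw [← hlight]; simp
    rw [h3] at h1
    have : (M.length : ℝ) ≤ k := by linarith
    exact_mod_cast this
  have hall : ∀ j : Fin M.length, ∃ l : List V,
      (∃ d ∈ D, IsClosedWalkAt l d) ∧ (∀ v ∈ (M.get j).verts, v ∈ l) ∧
        walkWeight w l ≤ 5 * lamstar := by
    intro j
    obtain ⟨i, hi⟩ := (hM _).1 (List.get_mem M j)
    exact htour _ (hL2 i _ hi)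
  choose tours ht1 ht2 ht3 using hall
  refine ⟨M.length, hMk, tours, ht1, ?_, ht3⟩
  intro v
  obtain ⟨i, hi⟩ := hcov v
  obtain ⟨p, hp, hvp⟩ := hL3 i v hi
  obtain ⟨j, rfl⟩ := List.get_of_mem ((hM p).2 ⟨i, hp⟩)
  exact ⟨j, ht2 j v hvp⟩
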